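/- Let C be a 2-reduced cocommutative dg coalgebra over ℚ. For every left dg C-comodule N, the unit N → t_* t^! N of the (t^! ⊣ t_*) adjunction, n ↦ n₍₀₎ ⊗ 1 ⊗ n₍₁₎, is a t-equivalence; that is, the induced map t^!N → t^!(t_* t^! N) is a quasi-isomorphism of ΩC-modules. -/

import Mathlib

open scoped TensorProduct

noncomputable section

/-- A homologically graded differential graded `ℚ`-vector space (chain complex of
`ℚ`-vector spaces presented as a graded module with a degree `-1` square-zero differential). -/
structure DGVect : Type 1 where
  carrier : Type
  [isAddCommGroup : AddCommGroup carrier]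
  [isModule : Module ℚ carrier]
  grading : ℤ → Submodule ℚ carrier
  [isDecomp : DirectSum.Decomposition grading]
  d : carrier →ₗ[ℚ] carrier
  d_mem : ∀ (n : ℤ), ∀ x ∈ grading n, d x ∈ grading (n - 1)
  d_sq : d.comp d = 0

attribute [instance] DGVect.isAddCommGroup DGVect.isModule DGVect.isDecomp

/-- The operator acting on the degree `n` graded component by `(-1)^(k*n)`. -/
def signOpOf {V : Type} [AddCommGroup V] [Module ℚ V] (g : ℤ → Submodule ℚ V)
    [DirectSum.Decomposition g] (k : ℤ) : V →ₗ[ℚ] V :=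
  (DirectSum.toModule ℚ ℤ V fun n => ((-1 : ℚ) ^ (k * n)) • (g n).subtype).comp
    (DirectSum.decomposeLinearEquiv g).toLinearMap

/-- The Koszul parity operator, acting by `(-1)^n` in degree `n`. -/
def parityOf {V : Type} [AddCommGroup V] [Module ℚ V] (g : ℤ → Submodule ℚ V)
    [DirectSum.Decomposition g] : V →ₗ[ℚ] V := signOpOf g 1

def DGVect.parity (V : DGVect) : V.carrier →ₗ[ℚ] V.carrier := parityOf V.grading

/-- A graded object is bounded below if it vanishes in all sufficiently negative degrees. -/
def DGVect.BoundedBelow (V : DGVect) : Prop := ∃ b : ℤ, ∀ n : ℤ, n < b → V.grading n = ⊥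

/-- The Koszul signed braiding `v ⊗ w ↦ (-1)^{|v||w|} w ⊗ v` of graded vector spaces. -/
def kSwapOf {V W : Type} [AddCommGroup V] [Module ℚ V] [AddCommGroup W] [Module ℚ W]
    (gV : ℤ → Submodule ℚ V) (gW : ℤ → Submodule ℚ W)
    [DirectSum.Decomposition gV] [DirectSum.Decomposition gW] :
    V ⊗[ℚ] W →ₗ[ℚ] W ⊗[ℚ] V :=
  TensorProduct.lift
    ((DirectSum.toModule ℚ ℤ (W →ₗ[ℚ] W ⊗[ℚ] V) (fun i =>
        (((DirectSum.toModule ℚ ℤ (V →ₗ[ℚ] W ⊗[ℚ] V) (fun j =>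
              ((-1 : ℚ) ^ (i * j)) • ((TensorProduct.mk ℚ W V).comp (gW j).subtype))).comp
            (DirectSum.decomposeLinearEquiv gW).toLinearMap).flip).comp
          (gV i).subtype)).comp
      (DirectSum.decomposeLinearEquiv gV).toLinearMap)

/-- The degree `n` part of the tensor product grading:
the span of the homogeneous tensors of total degree `n`. -/
def tensorGrading {V W : Type} [AddCommGroup V] [Module ℚ V] [AddCommGroup W] [Module ℚ W]
    (gV : ℤ → Submodule ℚ V) (gW : ℤ → Submodule ℚ W) (n : ℤ) : Submodule ℚ (V ⊗[ℚ] W) :=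
  ⨆ p : {p : ℤ × ℤ // p.1 + p.2 = n},
    LinearMap.range (TensorProduct.map (gV p.1.1).subtype (gW p.1.2).subtype)

/-- `f` is a quasi-isomorphism from the complex `(V, dV)` to the complex `(W, dW)`:
it induces a bijection on homology (`ker d / im d`). -/
def IsQuasiIso {V W : Type} [AddCommGroup V] [Module ℚ V] [AddCommGroup W] [Module ℚ W]
    (dV : V →ₗ[ℚ] V) (dW : W →ₗ[ℚ] W) (f : V →ₗ[ℚ] W) : Prop :=
  (∀ x : V, dV x = 0 → (∃ y, f x = dW y) → ∃ z, x = dV z) ∧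
  (∀ w : W, dW w = 0 → ∃ x, dV x = 0 ∧ ∃ y, w - f x = dW y)

/-- A differential graded algebra over `ℚ`. -/
structure DGAlgebra extends DGVect where
  mul : carrier →ₗ[ℚ] carrier →ₗ[ℚ] carrier
  one : carrier
  one_mem : one ∈ grading 0
  mul_mem : ∀ (i j : ℤ) (x y : carrier), x ∈ grading i → y ∈ grading j →
    mul x y ∈ grading (i + j)
  mul_assoc' : ∀ x y z : carrier, mul (mul x y) z = mul x (mul y z)
  one_mul' : ∀ x : carrier, mul one x = x
  mul_one' : ∀ x : carrier, mul x one = x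
  leibniz : ∀ (i : ℤ) (x y : carrier), x ∈ grading i →
    d (mul x y) = mul (d x) y + ((-1 : ℚ) ^ i) • mul x (d y)

/-- The multiplication of a dg algebra as a map out of the tensor product. -/
def DGAlgebra.mulMap (A : DGAlgebra) : A.carrier ⊗[ℚ] A.carrier →ₗ[ℚ] A.carrier :=
  TensorProduct.lift A.mul

/-- A dg algebra is connective if it is concentrated in non-negative degrees. -/
def DGAlgebra.Connective (A : DGAlgebra) : Prop := ∀ n : ℤ, n < 0 → A.grading n = ⊥

/-- A (coassociative counital) differential graded coalgebra over `ℚ`,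
non-negatively graded. -/
structure DGCoalgebra extends DGVect where
  comul : carrier →ₗ[ℚ] carrier ⊗[ℚ] carrier
  counit : carrier →ₗ[ℚ] ℚ
  nonneg : ∀ n : ℤ, n < 0 → grading n = ⊥
  comul_mem : ∀ (n : ℤ), ∀ x ∈ grading n, comul x ∈ tensorGrading grading grading n
  counit_zero : ∀ (n : ℤ), n ≠ 0 → ∀ x ∈ grading n, counit x = 0
  coassoc : (TensorProduct.assoc ℚ carrier carrier carrier).toLinearMap.comp
      ((TensorProduct.map comul LinearMap.id).comp comul)
      = (TensorProduct.map LinearMap.id comul).comp comul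
  counit_comul_left : (TensorProduct.lid ℚ carrier).toLinearMap.comp
      ((TensorProduct.map counit LinearMap.id).comp comul) = LinearMap.id
  counit_comul_right : (TensorProduct.rid ℚ carrier).toLinearMap.comp
      ((TensorProduct.map LinearMap.id counit).comp comul) = LinearMap.id
  comul_chain : comul.comp d
      = (TensorProduct.map d LinearMap.id + TensorProduct.map (parityOf grading) d).comp comul
  counit_chain : counit.comp d = 0

/-- Cocommutativity: the comultiplication is invariant under the Koszul signed twist. -/
def DGCoalgebra.Cocomm (C : DGCoalgebra) : Prop :=
  (kSwapOf C.grading C.grading).comp C.comul = C.comul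

/-- A coaugmented dg coalgebra: a dg coalgebra with a coaugmentation `η : ℚ → C`,
recorded by the grouplike element `one = η 1` in degree `0`. -/
structure CoaugDGCoalgebra extends DGCoalgebra where
  one : carrier
  one_mem : one ∈ grading 0
  counit_one : counit one = 1
  comul_one : comul one = one ⊗ₜ[ℚ] one

/-- A coaugmented dg coalgebra is 2-reduced if `C₀ = ℚ` (spanned by the coaugmentation)
and `C₁ = 0`. -/
def CoaugDGCoalgebra.TwoReduced (C : CoaugDGCoalgebra) : Prop :=
  C.grading 0 = Submodule.span ℚ {C.one} ∧ C.grading 1 = ⊥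

/-- A twisting chain `τ : C ⇝ A`: a degree `-1` linear map satisfying
`d(τc) = -τ(dc) - (-1)^{|c₍₀₎|} τ(c₍₀₎)·τ(c₍₁₎)`. -/
structure TwistingChain (C : DGCoalgebra) (A : DGAlgebra) where
  toFun : C.carrier →ₗ[ℚ] A.carrier
  mem : ∀ (n : ℤ), ∀ x ∈ C.grading n, toFun x ∈ A.grading (n - 1)
  twist : A.d.comp toFun + toFun.comp C.d
      + A.mulMap.comp ((TensorProduct.map (toFun.comp (parityOf C.grading)) toFun).comp C.comul)
      = 0

/-- A left dg module over a dg algebra. -/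
structure DGModule (A : DGAlgebra) extends DGVect where
  smul : A.carrier →ₗ[ℚ] carrier →ₗ[ℚ] carrier
  smul_mem : ∀ (i j : ℤ) (a : A.carrier) (x : carrier), a ∈ A.grading i → x ∈ grading j →
    smul a x ∈ grading (i + j)
  one_smul' : ∀ x : carrier, smul A.one x = x
  mul_smul' : ∀ (a b : A.carrier) (x : carrier), smul (A.mul a b) x = smul a (smul b x)
  leibniz : ∀ (i : ℤ) (a : A.carrier) (x : carrier), a ∈ A.grading i →
    d (smul a x) = smul (A.d a) x + ((-1 : ℚ) ^ i) • smul a (d x)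

/-- The action of a dg module as a map out of the tensor product. -/
def DGModule.actionMap {A : DGAlgebra} (M : DGModule A) :
    A.carrier ⊗[ℚ] M.carrier →ₗ[ℚ] M.carrier := TensorProduct.lift M.smul

/-- A left dg comodule over a dg coalgebra. -/
structure DGComodule (C : DGCoalgebra) extends DGVect where
  coact : carrier →ₗ[ℚ] C.carrier ⊗[ℚ] carrier
  coact_mem : ∀ (n : ℤ), ∀ x ∈ grading n, coact x ∈ tensorGrading C.grading grading n
  coassoc : (TensorProduct.assoc ℚ C.carrier C.carrier carrier).toLinearMap.comp
      ((TensorProduct.map C.comul LinearMap.id).comp coact)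
      = (TensorProduct.map LinearMap.id coact).comp coact
  counit_coact : (TensorProduct.lid ℚ carrier).toLinearMap.comp
      ((TensorProduct.map C.counit LinearMap.id).comp coact) = LinearMap.id
  coact_chain : coact.comp d
      = (TensorProduct.map C.d LinearMap.id + TensorProduct.map (parityOf C.grading) d).comp coact

/-- Morphisms of dg modules: degree `0` graded chain maps commuting with the action. -/
def IsModuleHom (A : DGAlgebra) (M M' : DGModule A)
    (g : M.carrier →ₗ[ℚ] M'.carrier) : Prop :=
  (∀ (n : ℤ), ∀ x ∈ M.grading n, g x ∈ M'.grading n) ∧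
  g.comp M.d = M'.d.comp g ∧
  g.comp M.actionMap = M'.actionMap.comp (TensorProduct.map LinearMap.id g)

/-- Morphisms of dg comodules: degree `0` graded chain maps commuting with the coaction. -/
def IsComoduleHom (C : DGCoalgebra) (N N' : DGComodule C)
    (f : N.carrier →ₗ[ℚ] N'.carrier) : Prop :=
  (∀ (n : ℤ), ∀ x ∈ N.grading n, f x ∈ N'.grading n) ∧
  f.comp N.d = N'.d.comp f ∧
  (TensorProduct.map LinearMap.id f).comp N.coact = N'.coact.comp f

/-- The `A`-action on a twisted extension `A ⊗_τ N`: multiplication on the first factor. -/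
def extAction (A : DGAlgebra) (N : Type) [AddCommGroup N] [Module ℚ N] :
    A.carrier ⊗[ℚ] (A.carrier ⊗[ℚ] N) →ₗ[ℚ] A.carrier ⊗[ℚ] N :=
  (TensorProduct.map A.mulMap LinearMap.id).comp
    (TensorProduct.assoc ℚ A.carrier A.carrier N).symm.toLinearMap

/-- The differential of the twisted extension `A ⊗_τ N`:
`d(a ⊗ n) = da ⊗ n + (-1)^{|a|} a ⊗ dn - (-1)^{|a|} a·τ(n₍₀₎) ⊗ n₍₁₎`
for a `C`-comodule `(N, dN, ρ)`. -/
def extDiff (C : DGCoalgebra) (A : DGAlgebra) (τ : TwistingChain C A)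
    (N : Type) [AddCommGroup N] [Module ℚ N]
    (dN : N →ₗ[ℚ] N) (ρ : N →ₗ[ℚ] C.carrier ⊗[ℚ] N) :
    A.carrier ⊗[ℚ] N →ₗ[ℚ] A.carrier ⊗[ℚ] N :=
  TensorProduct.map A.d LinearMap.id + TensorProduct.map (parityOf A.grading) dN
    - (TensorProduct.map
        (A.mulMap.comp (TensorProduct.map (parityOf A.grading) τ.toFun)) LinearMap.id).comp
        ((TensorProduct.assoc ℚ A.carrier C.carrier N).symm.toLinearMap.comp
          (TensorProduct.map LinearMap.id ρ))

/-- The `C`-coaction on a twisted coextension `C ⊗^τ M`, namely `Δ ⊗ id`. -/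
def coextCoact (C : DGCoalgebra) (M : Type) [AddCommGroup M] [Module ℚ M] :
    C.carrier ⊗[ℚ] M →ₗ[ℚ] C.carrier ⊗[ℚ] (C.carrier ⊗[ℚ] M) :=
  (TensorProduct.assoc ℚ C.carrier C.carrier M).toLinearMap.comp
    (TensorProduct.map C.comul LinearMap.id)

/-- The differential of the twisted coextension `C ⊗^τ M`, expressed in terms of the map
`tact : C ⊗ M → M`, `c ⊗ m ↦ τ(c)·m`:
`d(c ⊗ m) = dc ⊗ m + (-1)^{|c|} c ⊗ dm + (-1)^{|c₍₀₎|} c₍₀₎ ⊗ τ(c₍₁₎)·m`. -/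
def coextDiffFrom (C : DGCoalgebra) (M : Type) [AddCommGroup M] [Module ℚ M]
    (dM : M →ₗ[ℚ] M) (tact : C.carrier ⊗[ℚ] M →ₗ[ℚ] M) :
    C.carrier ⊗[ℚ] M →ₗ[ℚ] C.carrier ⊗[ℚ] M :=
  TensorProduct.map C.d LinearMap.id + TensorProduct.map (parityOf C.grading) dM
    + (TensorProduct.map (parityOf C.grading) tact).comp (coextCoact C M)

/-- The differential of the twisted coextension `C ⊗^τ M` of an `A`-module `(M, dM, act)`. -/
def coextDiff (C : DGCoalgebra) (A : DGAlgebra) (τ : TwistingChain C A)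
    (M : Type) [AddCommGroup M] [Module ℚ M]
    (dM : M →ₗ[ℚ] M) (act : A.carrier ⊗[ℚ] M →ₗ[ℚ] M) :
    C.carrier ⊗[ℚ] M →ₗ[ℚ] C.carrier ⊗[ℚ] M :=
  coextDiffFrom C M dM (act.comp (TensorProduct.map τ.toFun LinearMap.id))

/-- Morphisms of dg algebras. -/
structure DGAlgebraHom (A B : DGAlgebra) where
  toLinearMap : A.carrier →ₗ[ℚ] B.carrier
  mem : ∀ (n : ℤ), ∀ x ∈ A.grading n, toLinearMap x ∈ B.grading n
  chain : toLinearMap.comp A.d = B.d.comp toLinearMap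
  map_one : toLinearMap A.one = B.one
  map_mul : ∀ x y : A.carrier, toLinearMap (A.mul x y) = B.mul (toLinearMap x) (toLinearMap y)

/-- Data exhibiting a dg algebra as the cobar construction `ΩC` of a coaugmented
dg coalgebra `C`, via the universal twisting chain `t : C ⇝ ΩC`:
dg algebra maps `ΩC → A` correspond bijectively to twisting chains `C ⇝ A`
vanishing on the coaugmentation. -/
structure CobarData (C : CoaugDGCoalgebra) where
  alg : DGAlgebra
  t : TwistingChain C.toDGCoalgebra alg
  t_one : t.toFun C.one = 0
  univ : ∀ (A : DGAlgebra) (τ : TwistingChain C.toDGCoalgebra A), τ.toFun C.one = 0 →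
    ∃! F : DGAlgebraHom alg A, F.toLinearMap.comp t.toFun = τ.toFun

/-- A morphism of `C`-comodules is a `t`-equivalence if the induced morphism of twisted
extensions `ΩC ⊗_t N → ΩC ⊗_t M` is a quasi-isomorphism. -/
def IsTEquiv (C : CoaugDGCoalgebra) (Ω : CobarData C) (N M : DGComodule C.toDGCoalgebra)
    (f : N.carrier →ₗ[ℚ] M.carrier) : Prop :=
  IsQuasiIso (extDiff C.toDGCoalgebra Ω.alg Ω.t N.carrier N.d N.coact)
    (extDiff C.toDGCoalgebra Ω.alg Ω.t M.carrier M.d M.coact)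
    (TensorProduct.map LinearMap.id f)

/-! ## Statement 8: the unit of the Koszul adjunction is a `t`-equivalence -/

/-- The unit `N → t_* t^! N = C ⊗^t (ΩC ⊗_t N)`, `n ↦ n₍₀₎ ⊗ 1 ⊗ n₍₁₎`. -/
def cobarUnit (C : CoaugDGCoalgebra) (Ω : CobarData C)
    (N : DGComodule C.toDGCoalgebra) :
    N.carrier →ₗ[ℚ] C.carrier ⊗[ℚ] (Ω.alg.carrier ⊗[ℚ] N.carrier) :=
  (TensorProduct.map LinearMap.id
      ((TensorProduct.mk ℚ Ω.alg.carrier N.carrier) Ω.alg.one)).comp N.coact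

namespace CobarProof

open TensorProduct

section grading

variable {V : Type} [AddCommGroup V] [Module ℚ V] (g : ℤ → Submodule ℚ V)
    [DirectSum.Decomposition g]

theorem toModule_decompose_apply {X : Type} [AddCommGroup X] [Module ℚ X]
    (F : ∀ n, g n →ₗ[ℚ] X) {n : ℤ} {x : V} (hx : x ∈ g n) :
    (DirectSum.toModule ℚ ℤ X F).comp (DirectSum.decomposeLinearEquiv g).toLinearMap x
      = F n ⟨x, hx⟩ := by
  have : DirectSum.decomposeLinearEquiv g x = DirectSum.lof ℚ ℤ (fun i => g i) n ⟨x, hx⟩ := by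
    exact DirectSum.decompose_of_mem g hx
  simp only [LinearMap.comp_apply, LinearEquiv.coe_coe, this, DirectSum.toModule_lof]

theorem parity_of_mem {n : ℤ} {x : V} (hx : x ∈ g n) : parityOf g x = ((-1 : ℚ) ^ n) • x := by
  unfold parityOf signOpOf
  rw [toModule_decompose_apply g _ hx]
  simp

theorem linext {X : Type} [AddCommGroup X] [Module ℚ X] {F G : V →ₗ[ℚ] X}
    (h : ∀ n, ∀ x ∈ g n, F x = G x) : F = G := by
  ext x
  induction x using DirectSum.Decomposition.inductionOn g with
  | zero => simp
  | homogeneous m => exact h _ _ m.2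
  | add a b ha hb => simp [ha, hb]

theorem negone_sq (n : ℤ) : ((-1 : ℚ) ^ n) * ((-1 : ℚ) ^ n) = 1 := by
  rw [← mul_zpow]; simp

theorem parity_parity (x : V) : parityOf g (parityOf g x) = x := by
  have : (parityOf g).comp (parityOf g) = LinearMap.id := by
    apply linext g
    intro n x hx
    simp [parity_of_mem g hx, smul_smul, negone_sq]
  exact LinearMap.congr_fun this x

/-- homogenization of a linear map into `R[z,z⁻¹]`. -/
def homog {R : Type} [Ring R] [Algebra ℚ R] (k : ℤ) (p : V →ₗ[ℚ] R) :
    V →ₗ[ℚ] AddMonoidAlgebra R ℤ :=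
  (DirectSum.toModule ℚ ℤ _ fun n =>
    (AddMonoidAlgebra.lsingle (n + k)).comp (p.comp (g n).subtype)).comp
    (DirectSum.decomposeLinearEquiv g).toLinearMap

theorem homog_of_mem {R : Type} [Ring R] [Algebra ℚ R] (k : ℤ) (p : V →ₗ[ℚ] R)
    {n : ℤ} {x : V} (hx : x ∈ g n) :
    homog g k p x = AddMonoidAlgebra.single (n + k) (p x) := by
  unfold homog
  rw [toModule_decompose_apply g _ hx]
  simp

end grading

theorem tensorGrading_le {V W : Type} [AddCommGroup V] [Module ℚ V] [AddCommGroup W] [Module ℚ W]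
    (gV : ℤ → Submodule ℚ V) (gW : ℤ → Submodule ℚ W) (n : ℤ) (T : Submodule ℚ (V ⊗[ℚ] W))
    (h : ∀ i j x y, i + j = n → x ∈ gV i → y ∈ gW j → x ⊗ₜ[ℚ] y ∈ T) :
    tensorGrading gV gW n ≤ T := by
  unfold tensorGrading
  apply iSup_le
  rintro ⟨⟨i, j⟩, hp⟩
  rintro _ ⟨z, rfl⟩
  induction z with
  | zero => simp
  | tmul x y => exact h i j x y hp x.2 y.2
  | add a b ha hb => rw [map_add]; exact T.add_mem ha hb

section laurent

variable (R : Type) [Ring R] [Algebra ℚ R]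

open AddMonoidAlgebra

/-- the augmentation `z ↦ 1` -/
def aug : AddMonoidAlgebra R ℤ →ₐ[ℚ] R :=
  liftNCAlgHom (AlgHom.id ℚ R) 1 (fun x y => by simp [-LaurentPolynomial.single_eq_C_mul_T])

theorem aug_single (n : ℤ) (r : R) : aug R (single n r) = r := by
  refine (liftNC_single _ _ _ _).trans ?_
  simp

/-- `n ↦ (-z)^n` -/
def negz : Multiplicative ℤ →* AddMonoidAlgebra R ℤ where
  toFun n := single n.toAdd (((-1 : ℚ) ^ n.toAdd) • (1 : R))
  map_one' := by rw [one_def]; simp [-LaurentPolynomial.single_eq_C_mul_T]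
  map_mul' a b := by
    simp [-LaurentPolynomial.single_eq_C_mul_T, single_mul_single, zpow_add₀, smul_smul, mul_comm]

/-- the sign automorphism `z ↦ -z` -/
def sg : AddMonoidAlgebra R ℤ →ₐ[ℚ] AddMonoidAlgebra R ℤ :=
  liftNCAlgHom singleZeroAlgHom (negz R) (fun x y => by
    simp [-LaurentPolynomial.single_eq_C_mul_T, negz, Commute, SemiconjBy, single_mul_single])

theorem sg_single (n : ℤ) (r : R) : sg R (single n r) = ((-1 : ℚ) ^ n) • single n r := by
  simp [-LaurentPolynomial.single_eq_C_mul_T, sg, negz, single_mul_single]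

theorem sg_sg (x : AddMonoidAlgebra R ℤ) : sg R (sg R x) = x := by
  have : (sg R).toLinearMap.comp (sg R).toLinearMap = LinearMap.id := by
    apply lhom_ext'
    intro n
    ext r
    simp only [LinearMap.comp_apply, lsingle_apply, AlgHom.toLinearMap_apply, sg_single, map_smul,
      smul_smul, negone_sq, one_smul, LinearMap.id_apply]
  exact LinearMap.congr_fun this x

/-- graded pieces of `K R`. -/
def kgr (n : ℤ) : Submodule ℚ (AddMonoidAlgebra R ℤ × AddMonoidAlgebra R ℤ) :=
  (LinearMap.range (lsingle (R := ℚ) (S := R) n)).prod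
    (LinearMap.range (lsingle (R := ℚ) (S := R) (n - 1)))

theorem mem_kgr {n : ℤ} {x : AddMonoidAlgebra R ℤ × AddMonoidAlgebra R ℤ} :
    x ∈ kgr R n ↔ ∃ a b, x = (single n a, single (n - 1) b) := by
  constructor
  · rintro ⟨⟨a, ha⟩, ⟨b, hb⟩⟩
    exact ⟨a, b, Prod.ext ha.symm hb.symm⟩
  · rintro ⟨a, b, rfl⟩
    exact ⟨⟨a, rfl⟩, ⟨b, rfl⟩⟩

def lsum {X : Type} [AddCommMonoid X] [Module ℚ X] (F : ℤ → R →ₗ[ℚ] X) :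
    AddMonoidAlgebra R ℤ →ₗ[ℚ] X :=
  (Finsupp.lsum ℚ F).comp (coeffLinearEquiv ℚ).toLinearMap

theorem lsum_single {X : Type} [AddCommMonoid X] [Module ℚ X] (F : ℤ → R →ₗ[ℚ] X) (n : ℤ) (r : R) :
    lsum R F (single n r) = F n r := by
  simp [-LaurentPolynomial.single_eq_C_mul_T, lsum]

def kdec : (AddMonoidAlgebra R ℤ × AddMonoidAlgebra R ℤ) →ₗ[ℚ] DirectSum ℤ (fun n => kgr R n) :=
  LinearMap.coprod
    (lsum R fun n => (DirectSum.lof ℚ ℤ (fun n => kgr R n) n).comp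
      (LinearMap.codRestrict _ ((LinearMap.inl ℚ _ _).comp (lsingle n))
        (fun r => (mem_kgr R).2 ⟨r, 0, by simp [-LaurentPolynomial.single_eq_C_mul_T]⟩)))
    (lsum R fun n => (DirectSum.lof ℚ ℤ (fun n => kgr R n) (n + 1)).comp
      (LinearMap.codRestrict _ ((LinearMap.inr ℚ _ _).comp (lsingle n))
        (fun r => (mem_kgr R).2 ⟨0, r, by simp [-LaurentPolynomial.single_eq_C_mul_T]⟩)))

instance kdecomp : DirectSum.Decomposition (kgr R) :=
  DirectSum.Decomposition.ofLinearMap _ (kdec R)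
    (by
      apply LinearMap.prod_ext
      · apply lhom_ext'
        intro n
        ext1 r
        simp [-LaurentPolynomial.single_eq_C_mul_T, kdec, lsum_single]
      · apply lhom_ext'
        intro n
        ext1 r
        simp [-LaurentPolynomial.single_eq_C_mul_T, kdec, lsum_single])
    (by
      apply DirectSum.linearMap_ext
      intro n
      ext1 ⟨x, hx⟩
      obtain ⟨a, b, rfl⟩ := (mem_kgr R).1 hx
      simp only [LinearMap.comp_apply, DirectSum.coeLinearMap_lof, LinearMap.id_apply, kdec,
        LinearMap.coprod_apply, lsum_single]
      have key : ∀ (m : ℤ) (hm : m = n) (y : kgr R m) (z : kgr R n), (y : AddMonoidAlgebra R ℤ × AddMonoidAlgebra R ℤ) = z →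
          DirectSum.lof ℚ ℤ (fun n => kgr R n) m y = DirectSum.lof ℚ ℤ (fun n => kgr R n) n z := by
        rintro m rfl y z h
        rw [Subtype.ext h]
      rw [key (n - 1 + 1) (by ring) _ ⟨(0, single (n - 1) b), (mem_kgr R).2 ⟨0, b, by simp [-LaurentPolynomial.single_eq_C_mul_T]⟩⟩ (by simp [-LaurentPolynomial.single_eq_C_mul_T]),
        ← map_add]
      congr 1
      ext1
      simp [-LaurentPolynomial.single_eq_C_mul_T])

/-- the multiplication on pairs, with a Koszul sign -/
def kmul : (AddMonoidAlgebra R ℤ × AddMonoidAlgebra R ℤ) →ₗ[ℚ]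
    (AddMonoidAlgebra R ℤ × AddMonoidAlgebra R ℤ) →ₗ[ℚ]
    (AddMonoidAlgebra R ℤ × AddMonoidAlgebra R ℤ) :=
  LinearMap.mk₂ ℚ (fun x y => (x.1 * y.1, x.2 * y.1 + sg R x.1 * y.2))
    (fun x x' y => by ext1 <;> simp [-LaurentPolynomial.single_eq_C_mul_T, add_mul]; abel)
    (fun c x y => by ext1 <;> simp [-LaurentPolynomial.single_eq_C_mul_T])
    (fun x y y' => by ext1 <;> simp [-LaurentPolynomial.single_eq_C_mul_T, mul_add]; abel)
    (fun c x y => by ext1 <;> simp [-LaurentPolynomial.single_eq_C_mul_T])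

theorem kmul_apply (x y : AddMonoidAlgebra R ℤ × AddMonoidAlgebra R ℤ) :
    kmul R x y = (x.1 * y.1, x.2 * y.1 + sg R x.1 * y.2) := rfl

/-- The cofree dg algebra on `R[z,z⁻¹]`. -/
def K : DGAlgebra where
  carrier := AddMonoidAlgebra R ℤ × AddMonoidAlgebra R ℤ
  grading := kgr R
  d := (LinearMap.inl ℚ _ _).comp (LinearMap.snd ℚ _ _)
  d_mem := by
    intro n x hx
    obtain ⟨a, b, rfl⟩ := (mem_kgr R).1 hx
    exact (mem_kgr R).2 ⟨b, 0, by simp [-LaurentPolynomial.single_eq_C_mul_T]⟩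
  d_sq := by ext <;> simp [-LaurentPolynomial.single_eq_C_mul_T]
  mul := kmul R
  one := (1, 0)
  one_mem := (mem_kgr R).2 ⟨1, 0, by rw [one_def]; simp [-LaurentPolynomial.single_eq_C_mul_T]⟩
  mul_mem := by
    intro i j x y hx hy
    obtain ⟨a, b, rfl⟩ := (mem_kgr R).1 hx
    obtain ⟨a', b', rfl⟩ := (mem_kgr R).1 hy
    refine (mem_kgr R).2 ⟨a * a', b * a' + ((-1 : ℚ) ^ i) • (a * b'), ?_⟩
    rw [kmul_apply]
    simp only [single_mul_single, sg_single, smul_mul_assoc, single_add, smul_single]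
    rw [show i - 1 + j = i + j - 1 by ring, show i + (j - 1) = i + j - 1 by ring]
  mul_assoc' := by
    intro x y z
    simp only [kmul_apply, map_mul]
    ext1
    · simp [-LaurentPolynomial.single_eq_C_mul_T, mul_assoc]
    · simp [-LaurentPolynomial.single_eq_C_mul_T, mul_assoc, add_mul, mul_add, add_assoc]
  one_mul' := by intro x; simp [-LaurentPolynomial.single_eq_C_mul_T, kmul_apply]
  mul_one' := by intro x; simp [-LaurentPolynomial.single_eq_C_mul_T, kmul_apply]
  leibniz := by
    intro i x y hx
    obtain ⟨a, b, rfl⟩ := (mem_kgr R).1 hx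
    simp only [kmul_apply, LinearMap.comp_apply, LinearMap.inl_apply, LinearMap.snd_apply,
      sg_single]
    ext1
    · simp only [Prod.fst_add, Prod.smul_fst, smul_mul_assoc]
    · simp only [Prod.snd_add, Prod.smul_snd, mul_zero, add_zero, zero_mul, zero_add, smul_mul_assoc]
      have e : (-1 : ℚ) ^ (i - 1) + (-1 : ℚ) ^ i = 0 := by
        rw [zpow_sub₀ (by norm_num), zpow_one, div_neg, div_one]; ring
      rw [← add_smul, e, zero_smul]

theorem K_d (x : (K R).carrier) : (K R).d x = (x.2, 0) := rfl

end laurent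

section conv

variable (C : DGCoalgebra) {P : Type} [Ring P] [Algebra ℚ P]

def conv (f g : C.carrier →ₗ[ℚ] P) : C.carrier →ₗ[ℚ] P :=
  (LinearMap.mul' ℚ P).comp ((TensorProduct.map f g).comp C.comul)

theorem conv_add_left (f f' g : C.carrier →ₗ[ℚ] P) :
    conv C (f + f') g = conv C f g + conv C f' g := by
  simp [conv, TensorProduct.map_add_left, LinearMap.add_comp, LinearMap.comp_add]

theorem conv_add_right (f g g' : C.carrier →ₗ[ℚ] P) :
    conv C f (g + g') = conv C f g + conv C f g' := by
  simp [conv, TensorProduct.map_add_right, LinearMap.add_comp, LinearMap.comp_add]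

theorem conv_neg_left (f g : C.carrier →ₗ[ℚ] P) :
    conv C (-f) g = - conv C f g := by
  rw [eq_neg_iff_add_eq_zero, ← conv_add_left, neg_add_cancel]
  simp [conv]

theorem conv_neg_right (f g : C.carrier →ₗ[ℚ] P) :
    conv C f (-g) = - conv C f g := by
  rw [eq_neg_iff_add_eq_zero, ← conv_add_right, neg_add_cancel]
  simp [conv]

@[reducible] def coalg : Coalgebra ℚ C.carrier where
  comul := C.comul
  counit := C.counit
  coassoc := C.coassoc
  rTensor_counit_comp_comul := by
    ext c
    have := LinearMap.congr_fun C.counit_comul_left c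
    apply (TensorProduct.lid ℚ C.carrier).injective
    exact this.trans (one_smul ℚ c).symm
  lTensor_counit_comp_comul := by
    ext c
    have := LinearMap.congr_fun C.counit_comul_right c
    apply (TensorProduct.rid ℚ C.carrier).injective
    exact this.trans (one_smul ℚ c).symm

theorem conv_assoc (f g h : C.carrier →ₗ[ℚ] P) :
    conv C (conv C f g) h = conv C f (conv C g h) := by
  let _ := coalg C
  exact congrArg WithConv.ofConv (mul_assoc (WithConv.toConv f) (WithConv.toConv g) (WithConv.toConv h))

theorem conv_comp_d (f g : C.carrier →ₗ[ℚ] P) :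
    (conv C f g).comp C.d
      = conv C (f.comp C.d) g + conv C (f.comp (parityOf C.grading)) (g.comp C.d) := by
  have h := C.comul_chain
  unfold conv
  rw [LinearMap.comp_assoc, LinearMap.comp_assoc, h, ← LinearMap.comp_add]
  congr 1
  rw [← LinearMap.comp_assoc, LinearMap.comp_add, LinearMap.add_comp]
  rw [← TensorProduct.map_comp, ← TensorProduct.map_comp, LinearMap.comp_id]

theorem comul_parity :
    C.comul.comp (parityOf C.grading)
      = (TensorProduct.map (parityOf C.grading) (parityOf C.grading)).comp C.comul := by
  apply linext C.grading
  intro n x hx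
  rw [LinearMap.comp_apply, parity_of_mem _ hx, map_smul, LinearMap.comp_apply]
  have := C.comul_mem n x hx
  have h2 : tensorGrading C.grading C.grading n ≤ LinearMap.eqLocus
      (((-1 : ℚ) ^ n) • LinearMap.id)
      (TensorProduct.map (parityOf C.grading) (parityOf C.grading)) := by
    apply tensorGrading_le
    intro i j x y hij hx hy
    simp only [LinearMap.mem_eqLocus, LinearMap.smul_apply, LinearMap.id_apply,
      TensorProduct.map_tmul, parity_of_mem _ hx, parity_of_mem _ hy]
    rw [TensorProduct.smul_tmul_smul, ← hij, zpow_add₀ (by norm_num)]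
  exact h2 this

theorem conv_comp_parity (f g : C.carrier →ₗ[ℚ] P) :
    (conv C f g).comp (parityOf C.grading)
      = conv C (f.comp (parityOf C.grading)) (g.comp (parityOf C.grading)) := by
  unfold conv
  rw [LinearMap.comp_assoc, LinearMap.comp_assoc, comul_parity]
  congr 1
  rw [← LinearMap.comp_assoc, ← TensorProduct.map_comp]

end conv

theorem d_parity (V : DGVect) (x : V.carrier) :
    V.d (parityOf V.grading x) = - parityOf V.grading (V.d x) := by
  have : V.d.comp (parityOf V.grading) = - (parityOf V.grading).comp V.d := by
    apply linext V.grading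
    intro n x hx
    simp only [LinearMap.comp_apply, LinearMap.neg_apply, parity_of_mem _ hx,
      parity_of_mem _ (V.d_mem n x hx), map_smul]
    rw [zpow_sub₀ (by norm_num), zpow_one, div_neg, div_one, neg_smul, neg_neg]
  exact LinearMap.congr_fun this x

section twist

open AddMonoidAlgebra

variable (C : DGCoalgebra) (R : Type) [Ring R] [Algebra ℚ R] (p : C.carrier →ₗ[ℚ] R)

def tP : C.carrier →ₗ[ℚ] AddMonoidAlgebra R ℤ := homog C.grading (-1) p

def tQ : C.carrier →ₗ[ℚ] AddMonoidAlgebra R ℤ :=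
  -((tP C R p).comp C.d) + - conv C ((tP C R p).comp (parityOf C.grading)) (tP C R p)

theorem sg_tP (x : C.carrier) : sg R (tP C R p x) = - tP C R p (parityOf C.grading x) := by
  have : (sg R).toLinearMap.comp (tP C R p) = - (tP C R p).comp (parityOf C.grading) := by
    apply linext C.grading
    intro n x hx
    simp only [LinearMap.comp_apply, AlgHom.toLinearMap_apply, LinearMap.neg_apply,
      parity_of_mem _ hx, map_smul, tP, homog_of_mem _ _ _ hx, sg_single]
    rw [zpow_add₀ (by norm_num)]
    simp
  exact LinearMap.congr_fun this x

theorem tQ_mem {n : ℤ} {x : C.carrier} (hx : x ∈ C.grading n) :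
    ∃ b, tQ C R p x = single (n - 1 - 1) b := by
  have : tQ C R p x ∈ LinearMap.range (lsingle (R := ℚ) (S := R) (n - 1 - 1)) := by
    unfold tQ
    rw [LinearMap.add_apply, LinearMap.neg_apply, LinearMap.neg_apply]
    apply Submodule.add_mem
    · apply Submodule.neg_mem
      rw [LinearMap.comp_apply, tP, homog_of_mem _ _ _ (C.d_mem n x hx)]
      exact ⟨_, rfl⟩
    · apply Submodule.neg_mem
      have h2 : tensorGrading C.grading C.grading n ≤
          (LinearMap.range (lsingle (R := ℚ) (S := R) (n - 1 - 1))).comap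
          ((LinearMap.mul' ℚ _).comp (TensorProduct.map ((tP C R p).comp (parityOf C.grading))
            (tP C R p))) := by
        apply tensorGrading_le
        intro i j x y hij hx hy
        rw [Submodule.mem_comap]
        simp only [LinearMap.comp_apply, TensorProduct.map_tmul, LinearMap.mul'_apply,
          parity_of_mem _ hx, map_smul, tP, homog_of_mem _ _ _ hx, homog_of_mem _ _ _ hy,
          smul_mul_assoc, single_mul_single]
        apply Submodule.smul_mem
        rw [show i + -1 + (j + -1) = n - 1 - 1 by rw [← hij]; ring]
        exact ⟨_, rfl⟩
      exact h2 (C.comul_mem n x hx)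
  obtain ⟨b, hb⟩ := this
  exact ⟨b, hb.symm⟩

theorem kmulMap (f g f' g' : C.carrier →ₗ[ℚ] AddMonoidAlgebra R ℤ) (z : C.carrier ⊗[ℚ] C.carrier) :
    (K R).mulMap (TensorProduct.map (f.prod g) (f'.prod g') z)
      = (LinearMap.mul' ℚ _ (TensorProduct.map f f' z),
        LinearMap.mul' ℚ _ (TensorProduct.map g f' z)
         + LinearMap.mul' ℚ _ (TensorProduct.map ((sg R).toLinearMap.comp f) g' z)) := by
  induction z with
  | zero => simp only [map_zero, add_zero]; rfl
  | tmul x y => rfl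
  | add a b ha hb =>
    refine (congrArg _ (map_add (TensorProduct.map (f.prod g) (f'.prod g')) a b)).trans
      ((map_add (K R).mulMap _ _).trans ((congrArg₂ _ ha hb).trans ?_))
    simp only [map_add]
    refine Prod.ext rfl ?_
    change (_ + _) + (_ + _) = _
    abel

def tw : TwistingChain C (K R) where
  toFun := (tP C R p).prod (tQ C R p)
  mem := by
    intro n x hx
    obtain ⟨b, hb⟩ := tQ_mem C R p hx
    refine (mem_kgr R).2 ⟨p x, b, ?_⟩
    ext1
    · change tP C R p x = single (n - 1) (p x)
      rw [tP, homog_of_mem _ _ _ hx]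
      rfl
    · exact hb
  twist := by
    have hs : (sg R).toLinearMap.comp ((tP C R p).comp (parityOf C.grading)) = - tP C R p := by
      ext1 x
      simp [sg_tP, parity_parity]
    have hpp : (parityOf C.grading).comp (parityOf C.grading) = LinearMap.id := by
      ext1 x
      simp [parity_parity]
    have hdd := C.d_sq
    have hdp : C.d.comp (parityOf C.grading) = - (parityOf C.grading).comp C.d := by
      ext1 x
      simpa using d_parity C.toDGVect x
    have key : (tQ C R p).comp C.d
        + (conv C ((tQ C R p).comp (parityOf C.grading)) (tP C R p)
         + conv C (- tP C R p) (tQ C R p)) = 0 := by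
      unfold tQ
      set f := tP C R p
      simp only [LinearMap.add_comp, LinearMap.neg_comp, conv_comp_d, conv_comp_parity,
        LinearMap.comp_assoc, hpp, hdd, hdp, LinearMap.comp_zero, LinearMap.comp_id,
        LinearMap.comp_neg, conv_add_left, conv_add_right, conv_neg_left, conv_neg_right,
        conv_assoc]
      abel
    ext1 x
    have hm := kmulMap C R ((tP C R p).comp (parityOf C.grading))
      ((tQ C R p).comp (parityOf C.grading)) (tP C R p) (tQ C R p) (C.comul x)
    rw [hs] at hm
    have e : ((tP C R p).prod (tQ C R p)).comp (parityOf C.grading)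
      = ((tP C R p).comp (parityOf C.grading)).prod ((tQ C R p).comp (parityOf C.grading)) := rfl
    simp only [LinearMap.add_apply, LinearMap.comp_apply]
    erw [e, hm]
    refine Prod.ext ?_ ?_
    · change tQ C R p x + tP C R p (C.d x) + conv C _ _ x = 0
      simp [tQ]
    · change 0 + tQ C R p (C.d x) + (conv C _ _ x + conv C _ _ x) = 0
      rw [zero_add]
      exact LinearMap.congr_fun key x

end twist

section univ

open AddMonoidAlgebra

variable (C : CoaugDGCoalgebra) (Ω : CobarData C)

/-- `φ : A → R` is an algebra map. -/
structure IsAlg (A : DGAlgebra) {R : Type} [Ring R] [Algebra ℚ R] (φ : A.carrier →ₗ[ℚ] R) : Prop where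
  one : φ A.one = 1
  mul : ∀ x y, φ (A.mul x y) = φ x * φ y

theorem exists_alg (R : Type) [Ring R] [Algebra ℚ R] (p : C.carrier →ₗ[ℚ] R) (hp : p C.one = 0)
    (h1 : C.d C.one = 0) :
    ∃ φ : Ω.alg.carrier →ₗ[ℚ] R, IsAlg Ω.alg φ ∧ ∀ c, φ (Ω.t.toFun c) = p c := by
  have hP : tP C.toDGCoalgebra R p C.one = 0 := by
    rw [tP, homog_of_mem _ _ _ C.one_mem, hp, single_zero]
  have hone : (tw C.toDGCoalgebra R p).toFun C.one = 0 := by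
    refine Prod.ext hP ?_
    change tQ C.toDGCoalgebra R p C.one = 0
    simp [tQ, conv, h1, C.comul_one, hP]
  obtain ⟨F, hF, -⟩ := Ω.univ (K R) (tw C.toDGCoalgebra R p) hone
  refine ⟨(aug R).toLinearMap.comp ((LinearMap.fst ℚ _ _).comp F.toLinearMap), ⟨?_, ?_⟩, ?_⟩
  · change aug R (F.toLinearMap Ω.alg.one).1 = 1
    rw [F.map_one]
    exact map_one (aug R)
  · intro x y
    change aug R (F.toLinearMap (Ω.alg.mul x y)).1 = _
    rw [F.map_mul]
    exact map_mul (aug R) _ _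
  · intro c
    have h := LinearMap.congr_fun hF c
    refine (congrArg (fun z : AddMonoidAlgebra R ℤ × AddMonoidAlgebra R ℤ => aug R z.1) h).trans ?_
    change aug R (tP C.toDGCoalgebra R p c) = p c
    have : (aug R).toLinearMap.comp (tP C.toDGCoalgebra R p) = p := by
      apply linext C.grading
      intro n x hx
      simp only [LinearMap.comp_apply, AlgHom.toLinearMap_apply, tP, homog_of_mem _ _ _ hx,
        aug_single]
    exact LinearMap.congr_fun this c

theorem mul_parity (A : DGAlgebra) (x y : A.carrier) :
    parityOf A.grading (A.mul x y) = A.mul (parityOf A.grading x) (parityOf A.grading y) := by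
  have : A.mul.compr₂ (parityOf A.grading)
      = A.mul.compl₁₂ (parityOf A.grading) (parityOf A.grading) := by
    apply linext A.grading
    intro i x hx
    apply linext A.grading
    intro j y hy
    simp only [LinearMap.compr₂_apply, LinearMap.compl₁₂_apply, parity_of_mem _ hx,
      parity_of_mem _ hy, parity_of_mem _ (A.mul_mem i j x y hx hy), map_smul,
      LinearMap.smul_apply, smul_smul]
    rw [zpow_add₀ (by norm_num), mul_comm]
  exact LinearMap.congr_fun (LinearMap.congr_fun this x) y

theorem leib (A : DGAlgebra) (x y : A.carrier) :
    A.d (A.mul x y) = A.mul (A.d x) y + A.mul (parityOf A.grading x) (A.d y) := by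
  have : A.mul.compr₂ A.d
      = A.mul.comp A.d + (A.mul.compl₂ A.d).comp (parityOf A.grading) := by
    apply linext A.grading
    intro i x hx
    refine LinearMap.ext fun y => ?_
    change A.d (A.mul x y) = A.mul (A.d x) y + A.mul (parityOf A.grading x) (A.d y)
    rw [parity_of_mem _ hx, map_smul, LinearMap.smul_apply]
    exact A.leibniz i x y hx
  exact LinearMap.congr_fun (LinearMap.congr_fun this x) y

theorem parity_one (A : DGAlgebra) : parityOf A.grading A.one = A.one := by
  rw [parity_of_mem _ A.one_mem]; simp

theorem d_one (A : DGAlgebra) : A.d A.one = 0 := by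
  have := leib A A.one A.one
  rw [parity_one, A.mul_one', A.one_mul', A.mul_one'] at this
  simpa using this

variable {R : Type} [Ring R] [Algebra ℚ R]

def jA (A : DGAlgebra) (φ : A.carrier →ₗ[ℚ] R) (hφ : IsAlg A φ) : DGAlgebraHom A (K R) where
  toLinearMap := (homog A.grading 0 φ).prod ((homog A.grading 0 φ).comp A.d)
  mem := by
    intro n x hx
    refine (mem_kgr R).2 ⟨φ x, φ (A.d x), ?_⟩
    refine Prod.ext ?_ ?_
    · refine (homog_of_mem _ 0 φ hx).trans ?_
      rw [add_zero]
    · refine (homog_of_mem _ 0 φ (A.d_mem n x hx)).trans ?_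
      rw [add_zero]
  chain := by
    ext1 x
    refine Prod.ext rfl ?_
    change homog A.grading 0 φ (A.d (A.d x)) = 0
    have := LinearMap.congr_fun A.d_sq x
    simp only [LinearMap.comp_apply, LinearMap.zero_apply] at this
    rw [this, map_zero]
  map_one := by
    refine Prod.ext ?_ ?_
    · change homog A.grading 0 φ A.one = 1
      rw [homog_of_mem _ _ _ A.one_mem, hφ.one, one_def, add_zero]
    · change homog A.grading 0 φ (A.d A.one) = 0
      rw [d_one, map_zero]
  map_mul := by
    have hm : ∀ x y, homog A.grading 0 φ (A.mul x y)
        = homog A.grading 0 φ x * homog A.grading 0 φ y := by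
      intro x y
      have : A.mul.compr₂ (homog A.grading 0 φ)
          = (LinearMap.mul ℚ _).compl₁₂ (homog A.grading 0 φ) (homog A.grading 0 φ) := by
        apply linext A.grading
        intro i x hx
        apply linext A.grading
        intro j y hy
        simp only [LinearMap.compr₂_apply, LinearMap.compl₁₂_apply, homog_of_mem _ _ _ hx,
          homog_of_mem _ _ _ hy, homog_of_mem _ _ _ (A.mul_mem i j x y hx hy),
          LinearMap.mul_apply', single_mul_single, hφ.mul, add_zero]
      exact LinearMap.congr_fun (LinearMap.congr_fun this x) y
    have hsg : ∀ x, sg R (homog A.grading 0 φ x) = homog A.grading 0 φ (parityOf A.grading x) := by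
      intro x
      have : (sg R).toLinearMap.comp (homog A.grading 0 φ)
          = (homog A.grading 0 φ).comp (parityOf A.grading) := by
        apply linext A.grading
        intro i x hx
        simp only [LinearMap.comp_apply, AlgHom.toLinearMap_apply, homog_of_mem _ _ _ hx,
          parity_of_mem _ hx, map_smul, sg_single, add_zero]
      exact LinearMap.congr_fun this x
    intro x y
    refine Prod.ext (hm x y) ?_
    change homog A.grading 0 φ (A.d (A.mul x y)) =
      homog A.grading 0 φ (A.d x) * homog A.grading 0 φ y
      + sg R (homog A.grading 0 φ x) * homog A.grading 0 φ (A.d y)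
    rw [leib, map_add, hm, hm, hsg]

theorem jA_aug (A : DGAlgebra) (φ : A.carrier →ₗ[ℚ] R) (hφ : IsAlg A φ) (x : A.carrier) :
    aug R ((jA A φ hφ).toLinearMap x).1 = φ x := by
  have : (aug R).toLinearMap.comp (homog A.grading 0 φ) = φ := by
    apply linext A.grading
    intro n x hx
    simp only [LinearMap.comp_apply, AlgHom.toLinearMap_apply, homog_of_mem _ _ _ hx,
      aug_single]
  exact LinearMap.congr_fun this x

theorem jA_t (φ : Ω.alg.carrier →ₗ[ℚ] R) (hφ : IsAlg Ω.alg φ) :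
    (jA Ω.alg φ hφ).toLinearMap.comp Ω.t.toFun
      = (tw C.toDGCoalgebra R (φ.comp Ω.t.toFun)).toFun := by
  have e1 : (homog Ω.alg.grading 0 φ).comp Ω.t.toFun
      = tP C.toDGCoalgebra R (φ.comp Ω.t.toFun) := by
    apply linext C.grading
    intro n x hx
    simp only [LinearMap.comp_apply, tP, homog_of_mem _ _ _ hx,
      homog_of_mem _ _ _ (Ω.t.mem n x hx), add_zero]
    rfl
  have h1 := (jA Ω.alg φ hφ).chain
  have e3 : ∀ z, homog Ω.alg.grading 0 φ (Ω.alg.mulMap z)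
      = LinearMap.mul' ℚ _ (TensorProduct.map (homog Ω.alg.grading 0 φ)
        (homog Ω.alg.grading 0 φ) z) := by
    intro z
    induction z with
    | zero => simp
    | tmul x y => exact congrArg Prod.fst ((jA Ω.alg φ hφ).map_mul x y)
    | add a b ha hb => simp only [map_add, ha, hb]
  ext1 c
  refine Prod.ext (LinearMap.congr_fun e1 c) ?_
  change homog Ω.alg.grading 0 φ (Ω.alg.d (Ω.t.toFun c))
    = tQ C.toDGCoalgebra R (φ.comp Ω.t.toFun) c
  have ht := LinearMap.congr_fun Ω.t.twist c
  simp only [LinearMap.add_apply, LinearMap.comp_apply, LinearMap.zero_apply] at ht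
  rw [add_assoc] at ht
  rw [eq_neg_of_add_eq_zero_left ht, map_neg, map_add, e3, tQ, ← e1]
  rw [← LinearMap.comp_apply (TensorProduct.map _ _) (TensorProduct.map _ _),
    ← TensorProduct.map_comp, neg_add]
  rfl

theorem alg_uniq (h1 : C.d C.one = 0) (φ ψ : Ω.alg.carrier →ₗ[ℚ] R) (hφ : IsAlg Ω.alg φ)
    (hψ : IsAlg Ω.alg ψ)
    (h : ∀ c, φ (Ω.t.toFun c) = ψ (Ω.t.toFun c)) : φ = ψ := by
  have h' : φ.comp Ω.t.toFun = ψ.comp Ω.t.toFun := LinearMap.ext h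
  have hone : (tw C.toDGCoalgebra R (φ.comp Ω.t.toFun)).toFun C.one = 0 := by
    rw [← jA_t C Ω φ hφ, LinearMap.comp_apply, Ω.t_one, map_zero]
  obtain ⟨F, -, hu⟩ := Ω.univ (K R) (tw C.toDGCoalgebra R (φ.comp Ω.t.toFun)) hone
  have e1 := hu _ (jA_t C Ω φ hφ)
  have e2 := hu (jA Ω.alg ψ hψ) ((jA_t C Ω ψ hψ).trans (by rw [h']))
  ext x
  rw [← jA_aug Ω.alg φ hφ, ← jA_aug Ω.alg ψ hψ, e1, e2]

@[reducible] def algRing (A : DGAlgebra) : Ring A.carrier :=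
  { A.isAddCommGroup with
    mul := fun x y => A.mul x y
    one := A.one
    mul_assoc := A.mul_assoc'
    one_mul := A.one_mul'
    mul_one := A.mul_one'
    left_distrib := fun x y z => map_add (A.mul x) y z
    right_distrib := fun x y z => by
      change A.mul (x + y) z = A.mul x z + A.mul y z
      rw [map_add]; rfl
    zero_mul := fun x => by
      change A.mul 0 x = 0
      rw [map_zero]; rfl
    mul_zero := fun x => map_zero (A.mul x) }

theorem alg_induction (h1 : C.d C.one = 0) (T : Submodule ℚ Ω.alg.carrier)
    (hone : Ω.alg.one ∈ T) (hmul : ∀ x y, x ∈ T → y ∈ T → Ω.alg.mul x y ∈ T)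
    (ht : ∀ c, Ω.t.toFun c ∈ T) (x : Ω.alg.carrier) : x ∈ T := by
  let _ : Ring Ω.alg.carrier := algRing Ω.alg
  let _ : Algebra ℚ Ω.alg.carrier := Algebra.ofModule
    (fun r x y => by
      change Ω.alg.mul (r • x) y = r • Ω.alg.mul x y
      rw [map_smul]; rfl)
    (fun r x y => by
      change Ω.alg.mul x (r • y) = r • Ω.alg.mul x y
      rw [map_smul])
  let S : Subalgebra ℚ Ω.alg.carrier := T.toSubalgebra hone hmul
  obtain ⟨φ, hφ, hc⟩ := exists_alg C Ω S
    (LinearMap.codRestrict T Ω.t.toFun ht) (Subtype.ext Ω.t_one) h1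
  have := alg_uniq C Ω h1 (R := Ω.alg.carrier) (S.val.toLinearMap.comp φ) LinearMap.id
    ⟨by simp only [LinearMap.comp_apply, hφ.one]; rfl,
      fun x y => by simp only [LinearMap.comp_apply, hφ.mul]; rfl⟩
    ⟨rfl, fun x y => rfl⟩
    (fun c => by simp only [LinearMap.comp_apply, hc]; rfl)
  have e := LinearMap.congr_fun this x
  have e' : ((φ x : S) : Ω.alg.carrier) = x := e
  rw [← e']
  exact (φ x).2

end univ


section ext

variable (C : DGCoalgebra) (A : DGAlgebra) (τ : TwistingChain C A)
  (N : Type) [AddCommGroup N] [Module ℚ N]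

/-- left multiplication on `A ⊗ N` -/
def lam : A.carrier →ₗ[ℚ] (A.carrier ⊗[ℚ] N) →ₗ[ℚ] (A.carrier ⊗[ℚ] N) :=
  TensorProduct.curry (extAction A N)

theorem lam_tmul (a b : A.carrier) (n : N) : lam A N a (b ⊗ₜ n) = A.mul a b ⊗ₜ[ℚ] n := rfl

theorem lam_one (w : A.carrier ⊗[ℚ] N) : lam A N A.one w = w := by
  induction w with
  | zero => simp
  | tmul b n => rw [lam_tmul, A.one_mul']
  | add x y hx hy => rw [map_add, hx, hy]

theorem lam_mul (a b : A.carrier) (w : A.carrier ⊗[ℚ] N) :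
    lam A N (A.mul a b) w = lam A N a (lam A N b w) := by
  induction w with
  | zero => simp
  | tmul c n => rw [lam_tmul, lam_tmul, lam_tmul, A.mul_assoc']
  | add x y hx hy => rw [map_add, hx, hy, map_add, map_add]

/-- the twisting term -/
def Yt (a : A.carrier) : C.carrier ⊗[ℚ] N →ₗ[ℚ] A.carrier ⊗[ℚ] N :=
  ((TensorProduct.map
        (A.mulMap.comp (TensorProduct.map (parityOf A.grading) τ.toFun)) LinearMap.id).comp
        (TensorProduct.assoc ℚ A.carrier C.carrier N).symm.toLinearMap).comp
    (TensorProduct.mk ℚ _ _ a)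

theorem Yt_tmul (a : A.carrier) (c : C.carrier) (n : N) :
    Yt C A τ N a (c ⊗ₜ n) = A.mul (parityOf A.grading a) (τ.toFun c) ⊗ₜ[ℚ] n := rfl

theorem Yt_mul (a b : A.carrier) (z : C.carrier ⊗[ℚ] N) :
    Yt C A τ N (A.mul a b) z = lam A N (parityOf A.grading a) (Yt C A τ N b z) := by
  induction z with
  | zero => simp
  | tmul c n => rw [Yt_tmul, Yt_tmul, lam_tmul, mul_parity, A.mul_assoc']
  | add x y hx hy => rw [map_add, hx, hy, map_add, map_add]

variable (dN : N →ₗ[ℚ] N) (ρ : N →ₗ[ℚ] C.carrier ⊗[ℚ] N)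

theorem ext_tmul (a : A.carrier) (n : N) :
    extDiff C A τ N dN ρ (a ⊗ₜ n)
      = A.d a ⊗ₜ n + parityOf A.grading a ⊗ₜ dN n - Yt C A τ N a (ρ n) := rfl

theorem ext_leib (a : A.carrier) (w : A.carrier ⊗[ℚ] N) :
    extDiff C A τ N dN ρ (lam A N a w)
      = lam A N (A.d a) w + lam A N (parityOf A.grading a) (extDiff C A τ N dN ρ w) := by
  induction w with
  | zero => simp
  | tmul b n =>
    rw [lam_tmul, ext_tmul, ext_tmul, lam_tmul, map_sub, map_add, lam_tmul, lam_tmul, Yt_mul,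
      leib, mul_parity, add_tmul]
    abel
  | add x y hx hy =>
    rw [map_add, map_add, hx, hy, map_add, map_add, map_add]
    abel

end ext

section coext

variable (C : DGCoalgebra) (A : DGAlgebra) (τ : TwistingChain C A)
  (M : Type) [AddCommGroup M] [Module ℚ M] (dM : M →ₗ[ℚ] M) (act : A.carrier ⊗[ℚ] M →ₗ[ℚ] M)

/-- twisting term of the coextension -/
def Et (m : M) : C.carrier ⊗[ℚ] C.carrier →ₗ[ℚ] C.carrier ⊗[ℚ] M :=
  ((TensorProduct.map (parityOf C.grading)
      (act.comp (TensorProduct.map τ.toFun LinearMap.id))).comp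
    (TensorProduct.assoc ℚ C.carrier C.carrier M).toLinearMap).comp
    ((TensorProduct.mk ℚ _ M).flip m)

theorem Et_tmul (m : M) (x y : C.carrier) :
    Et C A τ M act m (x ⊗ₜ y) = parityOf C.grading x ⊗ₜ act (τ.toFun y ⊗ₜ m) := rfl

theorem coext_tmul (c : C.carrier) (m : M) :
    coextDiff C A τ M dM act (c ⊗ₜ m)
      = C.d c ⊗ₜ m + parityOf C.grading c ⊗ₜ dM m + Et C A τ M act m (C.comul c) := rfl

/-- twisting term of the double construction -/
def Xt (a : A.carrier) (m : M) : C.carrier ⊗[ℚ] C.carrier →ₗ[ℚ] A.carrier ⊗[ℚ] (C.carrier ⊗[ℚ] M) :=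
  ((Yt C A τ (C.carrier ⊗[ℚ] M) a).comp
    (TensorProduct.assoc ℚ C.carrier C.carrier M).toLinearMap).comp
    ((TensorProduct.mk ℚ _ M).flip m)

theorem Xt_tmul (a : A.carrier) (m : M) (x y : C.carrier) :
    Xt C A τ M a m (x ⊗ₜ y) = A.mul (parityOf A.grading a) (τ.toFun x) ⊗ₜ (y ⊗ₜ m) := rfl

/-- the differential of the double construction -/
def dW : A.carrier ⊗[ℚ] (C.carrier ⊗[ℚ] M) →ₗ[ℚ] A.carrier ⊗[ℚ] (C.carrier ⊗[ℚ] M) :=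
  extDiff C A τ (C.carrier ⊗[ℚ] M) (coextDiff C A τ M dM act) (coextCoact C M)

theorem dW_tmul (a : A.carrier) (c : C.carrier) (m : M) :
    dW C A τ M dM act (a ⊗ₜ (c ⊗ₜ m))
      = A.d a ⊗ₜ (c ⊗ₜ m) + parityOf A.grading a ⊗ₜ
        (C.d c ⊗ₜ m + parityOf C.grading c ⊗ₜ dM m + Et C A τ M act m (C.comul c))
        - Xt C A τ M a m (C.comul c) := rfl

variable {X : Type} [AddCommGroup X] [Module ℚ X] (B : A.carrier →ₗ[ℚ] M →ₗ[ℚ] X)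

def GB : A.carrier ⊗[ℚ] (C.carrier ⊗[ℚ] M) →ₗ[ℚ] X :=
  (TensorProduct.lift B).comp (TensorProduct.map LinearMap.id
    ((TensorProduct.lid ℚ M).toLinearMap.comp (TensorProduct.map C.counit LinearMap.id)))

theorem GB_tmul (a : A.carrier) (c : C.carrier) (m : M) :
    GB C A M B (a ⊗ₜ (c ⊗ₜ m)) = C.counit c • B a m := by
  change B a (C.counit c • m) = _
  rw [map_smul]

theorem counit_parity (c : C.carrier) : C.counit (parityOf C.grading c) = C.counit c := by
  have : C.counit.comp (parityOf C.grading) = C.counit := by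
    apply linext C.grading
    intro n x hx
    rw [LinearMap.comp_apply, parity_of_mem _ hx, map_smul]
    by_cases hn : n = 0
    · subst hn; simp
    · rw [C.counit_zero n hn x hx, smul_zero]
  exact LinearMap.congr_fun this c

theorem counit_d (c : C.carrier) : C.counit (C.d c) = 0 := LinearMap.congr_fun C.counit_chain c

theorem GB_Et (a : A.carrier) (m : M) (z : C.carrier ⊗[ℚ] C.carrier) :
    GB C A M B (a ⊗ₜ Et C A τ M act m z)
      = B a (act (τ.toFun (TensorProduct.lid ℚ C.carrier
        (TensorProduct.map C.counit LinearMap.id z)) ⊗ₜ m)) := by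
  induction z with
  | zero => simp
  | tmul x y =>
    rw [Et_tmul, GB_tmul, counit_parity, TensorProduct.map_tmul, TensorProduct.lid_tmul,
      LinearMap.id_apply, map_smul, ← smul_tmul', map_smul, map_smul]
  | add x y hx hy =>
    rw [map_add, tmul_add, map_add, hx, hy]
    simp only [map_add, add_tmul]

theorem GB_Xt (a : A.carrier) (m : M) (z : C.carrier ⊗[ℚ] C.carrier) :
    GB C A M B (Xt C A τ M a m z)
      = B (A.mul (parityOf A.grading a) (τ.toFun (TensorProduct.rid ℚ C.carrier
        (TensorProduct.map LinearMap.id C.counit z)))) m := by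
  induction z with
  | zero => simp
  | tmul x y =>
    rw [Xt_tmul, GB_tmul, TensorProduct.map_tmul, TensorProduct.rid_tmul,
      LinearMap.id_apply, map_smul, map_smul, map_smul, LinearMap.smul_apply]
  | add x y hx hy =>
    rw [map_add, map_add, hx, hy]
    simp only [map_add, LinearMap.add_apply]

theorem counit_left (c : C.carrier) : TensorProduct.lid ℚ C.carrier
        (TensorProduct.map C.counit LinearMap.id (C.comul c)) = c :=
  LinearMap.congr_fun C.counit_comul_left c

theorem counit_right (c : C.carrier) : TensorProduct.rid ℚ C.carrier
        (TensorProduct.map LinearMap.id C.counit (C.comul c)) = c :=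
  LinearMap.congr_fun C.counit_comul_right c

theorem GB_dW (a : A.carrier) (c : C.carrier) (m : M) :
    GB C A M B (dW C A τ M dM act (a ⊗ₜ (c ⊗ₜ m)))
      = C.counit c • (B (A.d a) m + B (parityOf A.grading a) (dM m))
        + B (parityOf A.grading a) (act (τ.toFun c ⊗ₜ m))
        - B (A.mul (parityOf A.grading a) (τ.toFun c)) m := by
  rw [dW_tmul, map_sub, map_add, tmul_add, tmul_add, map_add, map_add, GB_tmul, GB_tmul, GB_tmul,
    GB_Et, GB_Xt, counit_left, counit_right, counit_d, counit_parity, zero_smul, zero_add,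
    smul_add]
  abel

theorem parity_t (c : C.carrier) :
    parityOf A.grading (τ.toFun c) = - τ.toFun (parityOf C.grading c) := by
  have : (parityOf A.grading).comp τ.toFun = - τ.toFun.comp (parityOf C.grading) := by
    apply linext C.grading
    intro n x hx
    rw [LinearMap.comp_apply, LinearMap.neg_apply, LinearMap.comp_apply, parity_of_mem _ hx,
      parity_of_mem _ (τ.mem n x hx), map_smul, zpow_sub₀ (by norm_num), zpow_one, div_neg,
      div_one, neg_smul]
  exact LinearMap.congr_fun this c

end coext

section homotopy

variable (C : CoaugDGCoalgebra) (Ω : CobarData C)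
  (M : Type) [AddCommGroup M] [Module ℚ M] (dM : M →ₗ[ℚ] M)
  (act : Ω.alg.carrier ⊗[ℚ] M →ₗ[ℚ] M)

/-- reduction `c ↦ c - ε(c) 1` -/
def bar : C.carrier →ₗ[ℚ] C.carrier := LinearMap.id - C.counit.smulRight C.one

theorem bar_apply (c : C.carrier) : bar C c = c - C.counit c • C.one := rfl

def pc : C.carrier →ₗ[ℚ]
    Module.End ℚ ((Ω.alg.carrier ⊗[ℚ] (C.carrier ⊗[ℚ] M)) × M) :=
  LinearMap.mk₂ ℚ (fun c (x : (Ω.alg.carrier ⊗[ℚ] (C.carrier ⊗[ℚ] M)) × M) =>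
      (lam Ω.alg _ (parityOf Ω.alg.grading (Ω.t.toFun c)) x.1 - Ω.alg.one ⊗ₜ[ℚ] (bar C c ⊗ₜ[ℚ] x.2),
        act (Ω.t.toFun c ⊗ₜ x.2)))
    (fun c c' x => by
      refine Prod.ext ?_ ?_
      · simp only [map_add, add_tmul, tmul_add, LinearMap.add_apply, Prod.fst_add]; abel
      · simp only [map_add, add_tmul, Prod.snd_add])
    (fun r c x => by
      refine Prod.ext ?_ ?_
      · simp only [map_smul, ← smul_tmul', tmul_smul, LinearMap.smul_apply, Prod.smul_fst, smul_sub]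
      · simp only [map_smul, ← smul_tmul', Prod.smul_snd])
    (fun c x x' => by
      refine Prod.ext ?_ ?_
      · simp only [map_add, tmul_add, Prod.fst_add, Prod.snd_add]; abel
      · simp only [map_add, tmul_add, Prod.snd_add])
    (fun r c x => by
      refine Prod.ext ?_ ?_
      · simp only [map_smul, tmul_smul, Prod.smul_fst, Prod.smul_snd, smul_sub]
      · simp only [map_smul, tmul_smul, Prod.smul_snd])

theorem pc_apply (c : C.carrier) (x : (Ω.alg.carrier ⊗[ℚ] (C.carrier ⊗[ℚ] M)) × M) :
    pc C Ω M act c x =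
      (lam Ω.alg _ (parityOf Ω.alg.grading (Ω.t.toFun c)) x.1 - Ω.alg.one ⊗ₜ[ℚ] (bar C c ⊗ₜ[ℚ] x.2),
        act (Ω.t.toFun c ⊗ₜ x.2)) := rfl

theorem exists_H (h1 : C.d C.one = 0)
    (act_one : ∀ m, act (Ω.alg.one ⊗ₜ m) = m)
    (act_mul : ∀ a b m, act (Ω.alg.mul a b ⊗ₜ m) = act (a ⊗ₜ act (b ⊗ₜ m))) :
    ∃ H : Ω.alg.carrier →ₗ[ℚ] M →ₗ[ℚ] Ω.alg.carrier ⊗[ℚ] (C.carrier ⊗[ℚ] M),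
    (∀ m, H Ω.alg.one m = 0) ∧
    (∀ a b m, H (Ω.alg.mul a b) m
      = lam Ω.alg _ (parityOf Ω.alg.grading a) (H b m) + H a (act (b ⊗ₜ m))) ∧
    (∀ c m, H (Ω.t.toFun c) m = - Ω.alg.one ⊗ₜ[ℚ] (bar C c ⊗ₜ[ℚ] m)) := by
  have hp : pc C Ω M act C.one = 0 := by
    refine LinearMap.ext fun x => ?_
    rw [pc_apply, Ω.t_one, bar_apply, C.counit_one]
    simp
  obtain ⟨φ, hφ, hc⟩ := exists_alg C Ω _ (pc C Ω M act) hp h1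
  let T : Submodule ℚ Ω.alg.carrier :=
    { carrier := {a | ∀ w m, φ a (w, m)
        = (lam Ω.alg _ (parityOf Ω.alg.grading a) w + (φ a (0, m)).1, act (a ⊗ₜ m))}
      zero_mem' := by
        intro w m
        simp only [map_zero, LinearMap.zero_apply, zero_tmul, Prod.fst_zero, add_zero]
        rfl
      add_mem' := by
        intro a b ha hb w m
        rw [map_add, LinearMap.add_apply, LinearMap.add_apply, ha w m, hb w m, add_tmul]
        refine Prod.ext ?_ ?_
        · simp only [map_add, LinearMap.add_apply, Prod.fst_add]
          abel
        · simp only [map_add, Prod.snd_add]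
      smul_mem' := by
        intro r a ha w m
        rw [map_smul, LinearMap.smul_apply, LinearMap.smul_apply, ha w m, ← smul_tmul']
        refine Prod.ext ?_ ?_
        · simp only [map_smul, LinearMap.smul_apply, Prod.smul_fst, smul_add]
        · simp only [map_smul, Prod.smul_snd] }
  have hT : ∀ a, a ∈ T := by
    apply alg_induction C Ω h1
    · intro w m
      rw [hφ.one, parity_one, lam_one, act_one]
      simp
    · intro a b ha hb w m
      rw [hφ.mul, Module.End.mul_apply, Module.End.mul_apply, hb w m, hb 0 m, ha, ha (_ + _), mul_parity,
        lam_mul, act_mul]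
      simp only [map_add, map_zero, zero_add, add_assoc]
    · intro c w m
      rw [hc, pc_apply, pc_apply]
      simp only [map_zero, sub_eq_add_neg]
      rw [zero_add]
  refine ⟨(LinearMap.compl₂ φ (LinearMap.inr ℚ _ _)).compr₂ (LinearMap.fst ℚ _ _), ?_, ?_, ?_⟩
  · intro m
    change (φ Ω.alg.one (0, m)).1 = 0
    rw [hφ.one]
    rfl
  · intro a b m
    change (φ (Ω.alg.mul a b) (0, m)).1 = _ + (φ a (0, act (b ⊗ₜ m))).1
    rw [hφ.mul, Module.End.mul_apply, hT b 0 m, hT a _ _, map_zero, zero_add]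
    rfl
  · intro c m
    change (φ (Ω.t.toFun c) (0, m)).1 = _
    rw [hc, pc_apply, map_zero, zero_sub]

theorem H_tt (H : Ω.alg.carrier →ₗ[ℚ] M →ₗ[ℚ] Ω.alg.carrier ⊗[ℚ] (C.carrier ⊗[ℚ] M))
    (Hmul : ∀ a b m, H (Ω.alg.mul a b) m
      = lam Ω.alg _ (parityOf Ω.alg.grading a) (H b m) + H a (act (b ⊗ₜ m)))
    (Ht : ∀ c m, H (Ω.t.toFun c) m = - Ω.alg.one ⊗ₜ[ℚ] (bar C c ⊗ₜ[ℚ] m))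
    (m : M) (z : C.carrier ⊗[ℚ] C.carrier) :
    H (Ω.alg.mulMap (TensorProduct.map (Ω.t.toFun.comp (parityOf C.grading)) Ω.t.toFun z)) m
      = (Xt C.toDGCoalgebra Ω.alg Ω.t M Ω.alg.one m z
        - Ω.t.toFun (TensorProduct.rid ℚ C.carrier
            (TensorProduct.map LinearMap.id C.counit z)) ⊗ₜ (C.one ⊗ₜ m))
       - (Ω.alg.one ⊗ₜ Et C.toDGCoalgebra Ω.alg Ω.t M act m z
        - Ω.alg.one ⊗ₜ (C.one ⊗ₜ act (Ω.t.toFun (TensorProduct.lid ℚ C.carrier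
            (TensorProduct.map C.counit LinearMap.id z)) ⊗ₜ m))) := by
  induction z with
  | zero => simp
  | tmul x y =>
    rw [TensorProduct.map_tmul, TensorProduct.map_tmul, TensorProduct.map_tmul,
      TensorProduct.lid_tmul, TensorProduct.rid_tmul, Xt_tmul, Et_tmul, parity_one, Ω.alg.one_mul']
    change H (Ω.alg.mul (Ω.t.toFun (parityOf C.grading x)) (Ω.t.toFun y)) m = _
    rw [Hmul, Ht, Ht, parity_t, parity_parity, bar_apply, bar_apply, counit_parity,
      LinearMap.id_apply, LinearMap.id_apply]
    simp only [map_neg, LinearMap.neg_apply, smul_neg, lam_tmul, Ω.alg.mul_one', sub_tmul, tmul_sub,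
      map_sub, map_smul, ← smul_tmul', tmul_smul]
    abel
  | add x y hx hy =>
    simp only [map_add, LinearMap.add_apply, tmul_add, add_tmul, hx, hy]
    abel

theorem H_star (h1 : C.d C.one = 0)
    (act_one : ∀ m, act (Ω.alg.one ⊗ₜ m) = m)
    (act_mul : ∀ a b m, act (Ω.alg.mul a b ⊗ₜ m) = act (a ⊗ₜ act (b ⊗ₜ m)))
    (act_leib : ∀ a m, dM (act (a ⊗ₜ m))
      = act (Ω.alg.d a ⊗ₜ m) + act (parityOf Ω.alg.grading a ⊗ₜ dM m))
    (H : Ω.alg.carrier →ₗ[ℚ] M →ₗ[ℚ] Ω.alg.carrier ⊗[ℚ] (C.carrier ⊗[ℚ] M))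
    (Hone : ∀ m, H Ω.alg.one m = 0)
    (Hmul : ∀ a b m, H (Ω.alg.mul a b) m
      = lam Ω.alg _ (parityOf Ω.alg.grading a) (H b m) + H a (act (b ⊗ₜ m)))
    (Ht : ∀ c m, H (Ω.t.toFun c) m = - Ω.alg.one ⊗ₜ[ℚ] (bar C c ⊗ₜ[ℚ] m))
    (a : Ω.alg.carrier) : ∀ (m : M),
    dW C.toDGCoalgebra Ω.alg Ω.t M dM act (H a m) + H (Ω.alg.d a) m
      + H (parityOf Ω.alg.grading a) (dM m)
      = a ⊗ₜ (C.one ⊗ₜ m) - Ω.alg.one ⊗ₜ (C.one ⊗ₜ act (a ⊗ₜ m)) := by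
  let T : Submodule ℚ Ω.alg.carrier :=
    { carrier := {a | ∀ (m : M),
        dW C.toDGCoalgebra Ω.alg Ω.t M dM act (H a m) + H (Ω.alg.d a) m
          + H (parityOf Ω.alg.grading a) (dM m)
          = a ⊗ₜ (C.one ⊗ₜ m) - Ω.alg.one ⊗ₜ (C.one ⊗ₜ act (a ⊗ₜ m))}
      zero_mem' := by
        intro m
        simp
      add_mem' := by
        intro a b ha hb m
        have := congrArg₂ (· + ·) (ha m) (hb m)
        simp only [map_add, LinearMap.add_apply, tmul_add, add_tmul] at this ⊢
        rw [add_sub_add_comm, ← this]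
        abel
      smul_mem' := by
        intro r a ha m
        have := congrArg (r • ·) (ha m)
        simp only [map_smul, LinearMap.smul_apply, tmul_smul, ← smul_tmul', smul_add, smul_sub]
          at this ⊢
        exact this }
  suffices hT : a ∈ T from hT
  revert a
  apply alg_induction C Ω h1
  · intro m
    rw [parity_one, d_one, Hone, Hone, act_one]
    simp
  · intro a b ha hb m
    have e1 := congrArg (lam Ω.alg _ a) (hb m)
    have e2 := ha (act (b ⊗ₜ m))
    have el := ext_leib C.toDGCoalgebra Ω.alg Ω.t (C.carrier ⊗[ℚ] M)
      (coextDiff C.toDGCoalgebra Ω.alg Ω.t M dM act) (coextCoact C.toDGCoalgebra M)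
      (parityOf Ω.alg.grading a) (H b m)
    change dW C.toDGCoalgebra Ω.alg Ω.t M dM act _ = _ + lam Ω.alg _ _
      (dW C.toDGCoalgebra Ω.alg Ω.t M dM act _) at el
    rw [parity_parity, d_parity] at el
    rw [act_leib, map_add] at e2
    rw [Hmul, map_add, el, leib, mul_parity, map_add, LinearMap.add_apply, Hmul, Hmul, Hmul,
      parity_parity, act_mul]
    simp only [map_add, map_sub, lam_tmul, Ω.alg.mul_one', map_neg, LinearMap.neg_apply] at e1 ⊢
    rw [← sub_add_sub_cancel _ (a ⊗ₜ[ℚ] (C.one ⊗ₜ[ℚ] act (b ⊗ₜ[ℚ] m))), ← e1, ← e2]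
    abel
  · intro c m
    have ht := LinearMap.congr_fun Ω.t.twist c
    simp only [LinearMap.add_apply, LinearMap.comp_apply, LinearMap.zero_apply] at ht
    rw [add_assoc] at ht
    rw [eq_neg_of_add_eq_zero_left ht, map_neg, map_add, LinearMap.neg_apply, LinearMap.add_apply,
      H_tt C Ω M act H Hmul Ht, counit_left, counit_right, parity_t, map_neg, LinearMap.neg_apply,
      Ht, Ht, Ht, bar_apply, bar_apply, bar_apply, counit_d, counit_parity, zero_smul, sub_zero,
      sub_tmul, tmul_sub, ← smul_tmul', tmul_smul, map_neg, map_sub, map_smul, dW_tmul, dW_tmul,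
      d_one, parity_one, h1, parity_of_mem _ C.one_mem, C.comul_one, Et_tmul, Xt_tmul, Ω.t_one]
    simp only [map_zero, zero_tmul, tmul_zero, zpow_zero, one_smul, zero_add, add_zero, sub_zero,
      tmul_add, tmul_sub, neg_tmul, tmul_smul, sub_tmul, ← smul_tmul']
    abel

theorem homotopy (h1 : C.d C.one = 0)
    (act_one : ∀ m, act (Ω.alg.one ⊗ₜ m) = m)
    (act_mul : ∀ a b m, act (Ω.alg.mul a b ⊗ₜ m) = act (a ⊗ₜ act (b ⊗ₜ m)))
    (act_leib : ∀ a m, dM (act (a ⊗ₜ m))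
      = act (Ω.alg.d a ⊗ₜ m) + act (parityOf Ω.alg.grading a ⊗ₜ dM m)) :
    ∃ h : Ω.alg.carrier ⊗[ℚ] (C.carrier ⊗[ℚ] M) →ₗ[ℚ] Ω.alg.carrier ⊗[ℚ] (C.carrier ⊗[ℚ] M),
      ∀ w, dW C.toDGCoalgebra Ω.alg Ω.t M dM act (h w)
        + h (dW C.toDGCoalgebra Ω.alg Ω.t M dM act w)
        = w - Ω.alg.one ⊗ₜ (C.one ⊗ₜ
          GB C.toDGCoalgebra Ω.alg M (TensorProduct.curry act) w) := by
  obtain ⟨H, Hone, Hmul, Ht⟩ := exists_H C Ω M act h1 act_one act_mul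
  have star := H_star C Ω M dM act h1 act_one act_mul act_leib H Hone Hmul Ht
  refine ⟨GB C.toDGCoalgebra Ω.alg M H, fun w => ?_⟩
  induction w with
  | zero => simp
  | tmul a z =>
    induction z with
    | zero => simp
    | tmul c m =>
      have s := congrArg (C.counit c • ·) (star a m)
      simp only [smul_add, smul_sub] at s
      rw [GB_dW, GB_tmul, GB_tmul, map_smul, Hmul, parity_parity, Ht, TensorProduct.curry_apply,
        bar_apply, smul_add]
      simp only [map_neg, lam_tmul, Ω.alg.mul_one', sub_tmul, tmul_sub, map_sub, map_smul,
        tmul_smul, ← smul_tmul'] at s ⊢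
      rw [add_assoc] at s
      rw [eq_sub_of_add_eq s]
      abel
    | add x y hx hy =>
      simp only [tmul_add, map_add] at hx hy ⊢
      rw [add_sub_add_comm, ← hx, ← hy]
      abel
  | add x y hx hy =>
    simp only [tmul_add, map_add] at hx hy ⊢
    rw [add_sub_add_comm, ← hx, ← hy]
    abel

theorem g_chain
    (act_mul : ∀ a b m, act (Ω.alg.mul a b ⊗ₜ m) = act (a ⊗ₜ act (b ⊗ₜ m)))
    (act_leib : ∀ a m, dM (act (a ⊗ₜ m))
      = act (Ω.alg.d a ⊗ₜ m) + act (parityOf Ω.alg.grading a ⊗ₜ dM m))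
    (w : Ω.alg.carrier ⊗[ℚ] (C.carrier ⊗[ℚ] M)) :
    GB C.toDGCoalgebra Ω.alg M (TensorProduct.curry act) (dW C.toDGCoalgebra Ω.alg Ω.t M dM act w)
      = dM (GB C.toDGCoalgebra Ω.alg M (TensorProduct.curry act) w) := by
  induction w with
  | zero => simp
  | tmul a z =>
    induction z with
    | zero => simp
    | tmul c m =>
      rw [GB_dW, GB_tmul, map_smul]
      simp only [TensorProduct.curry_apply]
      rw [act_mul, act_leib, add_sub_cancel_right]
    | add x y hx hy => simp only [tmul_add, map_add] at hx hy ⊢; rw [hx, hy]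
  | add x y hx hy => simp only [tmul_add, map_add] at hx hy ⊢; rw [hx, hy]

end homotopy

section unit

variable (C : CoaugDGCoalgebra) (Ω : CobarData C) (N : DGComodule C.toDGCoalgebra)

/-- differential of `t^! N` -/
def dV : Ω.alg.carrier ⊗[ℚ] N.carrier →ₗ[ℚ] Ω.alg.carrier ⊗[ℚ] N.carrier :=
  extDiff C.toDGCoalgebra Ω.alg Ω.t N.carrier N.d N.coact

/-- differential of `t_* t^! N` -/
def dP : C.carrier ⊗[ℚ] (Ω.alg.carrier ⊗[ℚ] N.carrier) →ₗ[ℚ]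
    C.carrier ⊗[ℚ] (Ω.alg.carrier ⊗[ℚ] N.carrier) :=
  coextDiff C.toDGCoalgebra Ω.alg Ω.t (Ω.alg.carrier ⊗[ℚ] N.carrier) (dV C Ω N)
          (extAction Ω.alg N.carrier)

def uz : C.carrier ⊗[ℚ] N.carrier →ₗ[ℚ] C.carrier ⊗[ℚ] (Ω.alg.carrier ⊗[ℚ] N.carrier) :=
  TensorProduct.map LinearMap.id
      ((TensorProduct.mk ℚ Ω.alg.carrier N.carrier) Ω.alg.one)

def Pz : C.carrier ⊗[ℚ] (C.carrier ⊗[ℚ] N.carrier) →ₗ[ℚ]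
    C.carrier ⊗[ℚ] (Ω.alg.carrier ⊗[ℚ] N.carrier) :=
  TensorProduct.map (parityOf C.grading) (TensorProduct.map Ω.t.toFun LinearMap.id)

theorem unit_apply (n : N.carrier) : cobarUnit C Ω N n = uz C Ω N (N.coact n) := rfl

theorem Yt_one (z : C.carrier ⊗[ℚ] N.carrier) :
    Yt C.toDGCoalgebra Ω.alg Ω.t N.carrier Ω.alg.one z
      = TensorProduct.map Ω.t.toFun LinearMap.id z := by
  induction z with
  | zero => simp
  | tmul c n => rw [Yt_tmul, parity_one, Ω.alg.one_mul']; rfl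
  | add x y hx hy => rw [map_add, map_add, hx, hy]

theorem Et_one (n : N.carrier) (z : C.carrier ⊗[ℚ] C.carrier) :
    Et C.toDGCoalgebra Ω.alg Ω.t (Ω.alg.carrier ⊗[ℚ] N.carrier) (extAction Ω.alg N.carrier)
      (Ω.alg.one ⊗ₜ n) z = Pz C Ω N (TensorProduct.assoc ℚ _ _ _ (z ⊗ₜ n)) := by
  induction z with
  | zero => simp
  | tmul c c' =>
    rw [Et_tmul]
    change parityOf C.grading c ⊗ₜ[ℚ] (Ω.alg.mul (Ω.t.toFun c') Ω.alg.one ⊗ₜ[ℚ] n) = _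
    rw [Ω.alg.mul_one']
    rfl
  | add x y hx hy => rw [map_add, add_tmul, map_add, map_add, hx, hy]

theorem dP_uz (z : C.carrier ⊗[ℚ] N.carrier) :
    dP C Ω N (uz C Ω N z)
      = uz C Ω N (TensorProduct.map C.d LinearMap.id z + TensorProduct.map (parityOf C.grading) N.d z)
        - Pz C Ω N (TensorProduct.map LinearMap.id N.coact z)
        + Pz C Ω N (TensorProduct.assoc ℚ _ _ _ (TensorProduct.map C.comul LinearMap.id z)) := by
  induction z with
  | zero => simp
  | tmul c n =>
    change dP C Ω N (c ⊗ₜ (Ω.alg.one ⊗ₜ n)) = _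
    rw [dP, coext_tmul, Et_one, dV, ext_tmul, d_one, parity_one, Yt_one, zero_tmul, zero_add,
      tmul_sub, map_add]
    simp only [TensorProduct.map_tmul, uz, Pz, LinearMap.id_apply, TensorProduct.mk_apply]
    abel
  | add x y hx hy =>
    simp only [map_add] at hx hy ⊢
    rw [hx, hy]
    abel

theorem unit_chain (n : N.carrier) : dP C Ω N (cobarUnit C Ω N n) = cobarUnit C Ω N (N.d n) := by
  have e1 := LinearMap.congr_fun N.coassoc n
  have e2 := LinearMap.congr_fun N.coact_chain n
  simp only [LinearMap.comp_apply, LinearEquiv.coe_coe, LinearMap.add_apply] at e1 e2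
  rw [unit_apply, unit_apply, dP_uz, e1, e2, sub_add_cancel]

theorem coact_uz (z : C.carrier ⊗[ℚ] N.carrier) :
    coextCoact C.toDGCoalgebra _ (uz C Ω N z)
      = TensorProduct.map LinearMap.id (uz C Ω N)
        (TensorProduct.assoc ℚ _ _ _ (TensorProduct.map C.comul LinearMap.id z)) := by
  induction z with
  | zero => simp
  | tmul c n =>
    change TensorProduct.assoc ℚ _ _ _ (C.comul c ⊗ₜ (Ω.alg.one ⊗ₜ n))
      = TensorProduct.map LinearMap.id (uz C Ω N) (TensorProduct.assoc ℚ _ _ _ (C.comul c ⊗ₜ n))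
    induction C.comul c with
    | zero => simp
    | tmul x y => rfl
    | add x y hx hy => simp only [add_tmul, map_add, hx, hy]
  | add x y hx hy => simp only [map_add, hx, hy]

theorem unit_coact (n : N.carrier) :
    coextCoact C.toDGCoalgebra _ (cobarUnit C Ω N n)
      = TensorProduct.map LinearMap.id (cobarUnit C Ω N) (N.coact n) := by
  have e1 := LinearMap.congr_fun N.coassoc n
  simp only [LinearMap.comp_apply, LinearEquiv.coe_coe] at e1
  rw [unit_apply, coact_uz, e1, ← LinearMap.comp_apply, ← TensorProduct.map_comp]
  rfl

theorem Yt_map (a : Ω.alg.carrier) (z : C.carrier ⊗[ℚ] N.carrier) :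
    Yt C.toDGCoalgebra Ω.alg Ω.t _ a (TensorProduct.map LinearMap.id (cobarUnit C Ω N) z)
      = TensorProduct.map LinearMap.id (cobarUnit C Ω N)
        (Yt C.toDGCoalgebra Ω.alg Ω.t _ a z) := by
  induction z with
  | zero => simp
  | tmul c n => rfl
  | add x y hx hy => simp only [map_add, hx, hy]

theorem f_chain (v : Ω.alg.carrier ⊗[ℚ] N.carrier) :
    dW C.toDGCoalgebra Ω.alg Ω.t _ (dV C Ω N) (extAction Ω.alg N.carrier)
      (TensorProduct.map LinearMap.id (cobarUnit C Ω N) v)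
      = TensorProduct.map LinearMap.id (cobarUnit C Ω N) (dV C Ω N v) := by
  induction v with
  | zero => simp
  | tmul a n =>
    rw [TensorProduct.map_tmul, dW, ext_tmul, unit_coact, Yt_map, dV, ext_tmul, map_sub, map_add]
    have := unit_chain C Ω N n
    rw [dP] at this
    erw [this]
    rfl
  | add x y hx hy => simp only [map_add, hx, hy]

theorem g_uz (a : Ω.alg.carrier) (z : C.carrier ⊗[ℚ] N.carrier) :
    GB C.toDGCoalgebra Ω.alg _ (TensorProduct.curry (extAction Ω.alg N.carrier))
      (a ⊗ₜ uz C Ω N z)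
      = a ⊗ₜ TensorProduct.lid ℚ _ (TensorProduct.map C.counit LinearMap.id z) := by
  induction z with
  | zero => simp
  | tmul c n =>
    change GB C.toDGCoalgebra Ω.alg _ _ (a ⊗ₜ (c ⊗ₜ (Ω.alg.one ⊗ₜ n))) = _
    rw [GB_tmul]
    change _ • (Ω.alg.mul a Ω.alg.one ⊗ₜ[ℚ] n) = _
    rw [Ω.alg.mul_one', TensorProduct.map_tmul, TensorProduct.lid_tmul, tmul_smul]
    rfl
  | add x y hx hy => simp only [map_add, tmul_add, hx, hy]

theorem g_f (v : Ω.alg.carrier ⊗[ℚ] N.carrier) :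
    GB C.toDGCoalgebra Ω.alg _ (TensorProduct.curry (extAction Ω.alg N.carrier))
      (TensorProduct.map LinearMap.id (cobarUnit C Ω N) v) = v := by
  induction v with
  | zero => simp
  | tmul a n =>
    rw [TensorProduct.map_tmul, unit_apply, LinearMap.id_apply, g_uz]
    have := LinearMap.congr_fun N.counit_coact n
    exact congrArg (fun y => a ⊗ₜ[ℚ] y) this
  | add x y hx hy => simp only [map_add, hx, hy]

theorem main_aux :
    IsQuasiIso (dV C Ω N)
      (dW C.toDGCoalgebra Ω.alg Ω.t _ (dV C Ω N) (extAction Ω.alg N.carrier))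
      (TensorProduct.map LinearMap.id (cobarUnit C Ω N)) := by
  have h1 : C.d C.one = 0 := by
    have h := C.d_mem 0 C.one C.one_mem
    rw [C.nonneg (0 - 1) (by norm_num)] at h
    exact (Submodule.mem_bot ℚ).1 h
  have act_one := lam_one Ω.alg N.carrier
  have act_mul := lam_mul Ω.alg N.carrier
  have act_leib := ext_leib C.toDGCoalgebra Ω.alg Ω.t N.carrier N.d N.coact
  obtain ⟨h, hh⟩ := homotopy C Ω _ (dV C Ω N) (extAction Ω.alg N.carrier) h1 act_one act_mul act_leib
  have gc := g_chain C Ω _ (dV C Ω N) (extAction Ω.alg N.carrier) act_mul act_leib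
  refine ⟨?_, ?_⟩
  · rintro x - ⟨y, hy⟩
    refine ⟨GB C.toDGCoalgebra Ω.alg _ (TensorProduct.curry (extAction Ω.alg N.carrier)) y, ?_⟩
    · rw [← gc, ← hy, g_f]
  · intro w hw
    refine ⟨GB C.toDGCoalgebra Ω.alg _ (TensorProduct.curry (extAction Ω.alg N.carrier)) w, ?_, ?_⟩
    · rw [← gc, hw, map_zero]
    · have := hh (w - TensorProduct.map LinearMap.id (cobarUnit C Ω N)
        (GB C.toDGCoalgebra Ω.alg _ (TensorProduct.curry (extAction Ω.alg N.carrier)) w))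
      rw [map_sub (dW C.toDGCoalgebra Ω.alg Ω.t _ (dV C Ω N) (extAction Ω.alg N.carrier)) w,
        f_chain, ← gc, hw, map_zero, map_zero, sub_zero, map_zero, add_zero,
        map_sub (GB C.toDGCoalgebra Ω.alg _ (TensorProduct.curry (extAction Ω.alg N.carrier))),
        g_f, sub_self, tmul_zero, tmul_zero, sub_zero] at this
      exact ⟨_, this.symm⟩

end unit


end CobarProof

/-- For a 2-reduced cocommutative dg coalgebra `C` and any left dg
`C`-comodule `N`, the unit `N → t_* t^! N` of the `(t^! ⊣ t_*)` adjunction is a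
`t`-equivalence: the induced map `t^!N → t^!(t_* t^! N)` is a quasi-isomorphism of
`ΩC`-modules. -/
theorem cobar_unit_is_tEquiv (C : CoaugDGCoalgebra) (hred : C.TwoReduced)
    (hcc : C.toDGCoalgebra.Cocomm) (Ω : CobarData C) (N : DGComodule C.toDGCoalgebra) :
    IsQuasiIso
      (V := Ω.alg.carrier ⊗[ℚ] N.carrier)
      (W := Ω.alg.carrier ⊗[ℚ] (C.carrier ⊗[ℚ] (Ω.alg.carrier ⊗[ℚ] N.carrier)))
      (extDiff C.toDGCoalgebra Ω.alg Ω.t N.carrier N.d N.coact)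
      (extDiff C.toDGCoalgebra Ω.alg Ω.t
        (C.carrier ⊗[ℚ] (Ω.alg.carrier ⊗[ℚ] N.carrier))
        (coextDiff C.toDGCoalgebra Ω.alg Ω.t (Ω.alg.carrier ⊗[ℚ] N.carrier)
          (extDiff C.toDGCoalgebra Ω.alg Ω.t N.carrier N.d N.coact)
          (extAction Ω.alg N.carrier))
        (coextCoact C.toDGCoalgebra (Ω.alg.carrier ⊗[ℚ] N.carrier)))
      (TensorProduct.map LinearMap.id (cobarUnit C Ω N)) := by
  exact CobarProof.main_aux C Ω N

end
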